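/- Let M ≥ 0, N ≥ 1, k ∈ I_{M,N}, (ℓ,η) ∈ D^k_{M,N}, and assume additionally −Re(τ) ≤ min_{1≤r≤N} Re(ℓ_r η) and −Re(τ) < min_{1≤r≤N} Re((2ℓ_r + 1 − n_k(r))η)/(n_k(r)+1). Let γ ∈ Γ^k_{M,N;τ}, j ∈ {1,…,M}, and t ∈ Ã_τ. Fix x_i ∈ t_{k_i} + γ_i + √−1·[0,π] for i < j and x_i ∈ t_{k_i} + γ_i + δ_{k_i,k_j}·τ + √−1·[0,π] for i > j. Then for every m ∈ I_{M,N}, the function x_j ↦ w_k(x; t + τ e_{k_j}) · β_m(x; t + τ e_{k_j}) / Φ_k(t + τ e_{k_j}) is π√−1-periodic in x_j and has no poles in the vertical strip {z ∈ ℂ : Re(t_{k_j} + γ_j + τ) ≤ Re(z) ≤ Re(t_{k_j} + γ_j)}, i.e. it extends holomorphically to an open neighborhood of that strip. -/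

import Mathlib

open Complex MeasureTheory

noncomputable section

namespace BQKZ

/-- `(z;p)_∞ = ∏_{m ≥ 0} (1 - z pᵐ)`; used with `p = q²`. -/
def poch (p z : ℂ) : ℂ := ∏' m : ℕ, (1 - z * p ^ m)

/-- renormalized Jacobi theta `θ(z) = (z;p)_∞ (p z⁻¹;p)_∞`, with `p = q²`. -/
def theta (p z : ℂ) : ℂ := poch p z * poch p (p * z⁻¹)

/-- `q² = e^{2τ}` where `q = e^τ`. -/
def qsq (τ : ℂ) : ℂ := exp (2 * τ)

/-- `ξ̃₊ = ξ₊ - η/2 - τ/2`. -/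
def xiP (τ η ξp : ℂ) : ℂ := ξp - η / 2 - τ / 2

/-- `ξ̃₋ = ξ₋ - η/2`. -/
def xiM (η ξm : ℂ) : ℂ := ξm - η / 2

/-- `n_k(r) = #{i : k i = r}`. -/
def nk {M N : ℕ} (k : Fin M → Fin N) (r : Fin N) : ℕ :=
  (Finset.univ.filter fun i => k i = r).card

/-- `φ_{k;r}`. -/
def phiC (η ξp ξm : ℂ) {N M : ℕ} (ℓ : Fin N → ℂ) (k : Fin M → Fin N) (r : Fin N) : ℂ :=
  (∏ i ∈ Finset.univ.filter fun i : Fin M => k i = r,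
      exp (2 * (η - ξp - ξm) +
        4 * ((M : ℂ) - ((i : ℕ) + 1) - ∑ s ∈ Finset.univ.filter fun s : Fin N => r ≤ s, ℓ s) * η)) *
    exp (-4 * ℓ r * η * ((Finset.univ.filter fun i : Fin M => r < k i).card : ℂ))

/-- `Φ_k(t)`. -/
def PhiF (τ η ξp ξm : ℂ) {N M : ℕ} (ℓ : Fin N → ℂ) (k : Fin M → Fin N) (t : Fin N → ℂ) : ℂ :=
  ∏ r, theta (qsq τ) (exp (2 * t r)) / theta (qsq τ) (phiC η ξp ξm ℓ k r * exp (2 * t r))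

/-- `F(x;t)`. -/
def Ffun (τ η : ℂ) {N : ℕ} (ℓ : Fin N → ℂ) (x : ℂ) (t : Fin N → ℂ) : ℂ :=
  ∏ s, (poch (qsq τ) (exp (-2 * (t s + x - ℓ s * η))) * poch (qsq τ) (exp (-2 * (t s - x - ℓ s * η)))) /
       (poch (qsq τ) (exp (-2 * (t s + x + ℓ s * η))) * poch (qsq τ) (exp (-2 * (t s - x + ℓ s * η))))

/-- `g(x)`. -/
def gfun (τ η ξp ξm : ℂ) (x : ℂ) : ℂ :=
  (poch (qsq τ) (qsq τ * exp (2 * (xiP τ η ξp - x))) * poch (qsq τ) (qsq τ * exp (2 * (xiM η ξm - x)))) /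
  (poch (qsq τ) (exp (2 * (-xiP τ η ξp - x))) * poch (qsq τ) (exp (2 * (-xiM η ξm - x))))

/-- `h(x)`. -/
def hfun (τ η : ℂ) (x : ℂ) : ℂ :=
  (1 - exp (-2 * x)) * poch (qsq τ) (qsq τ * exp (-2 * (x + η))) / poch (qsq τ) (exp (-2 * (x - η)))

/-- `ψ_{k;i}`. -/
def psiC (τ η ξp ξm : ℂ) {N M : ℕ} (ℓ : Fin N → ℂ) (k : Fin M → Fin N) (i : Fin M) : ℂ :=
  xiP τ η ξp + xiM η ξm + τ + ℓ (k i) * η +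
    2 * ((∑ s ∈ Finset.univ.filter fun s : Fin N => k i < s, ℓ s) - (M : ℂ) + ((i : ℕ) + 1)) * η

/-- `u_{k;i}(x;t)`. -/
def ufun (τ η ξp ξm : ℂ) {N M : ℕ} (ℓ : Fin N → ℂ) (k : Fin M → Fin N) (i : Fin M) (x : ℂ)
    (t : Fin N → ℂ) : ℂ :=
  exp (-t (k i)) * theta (qsq τ) (exp (2 * (x - t (k i) + psiC τ η ξp ξm ℓ k i))) *
    (∏ s ∈ Finset.univ.filter fun s : Fin N => k i < s,
      theta (qsq τ) (exp (2 * (x - t s - ℓ s * η)))) /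
    ∏ s ∈ Finset.univ.filter fun s : Fin N => k i ≤ s,
      theta (qsq τ) (exp (2 * (x - t s + ℓ s * η)))

/-- `w_k(x;t)/Φ_k(t)` (the weight function with the `Φ_k` prefactor cancelled). -/
def w0 (τ η ξp ξm : ℂ) {N M : ℕ} (ℓ : Fin N → ℂ) (k : Fin M → Fin N) (x : Fin M → ℂ)
    (t : Fin N → ℂ) : ℂ :=
  (∏ i, Ffun τ η ℓ (x i) t * gfun τ η ξp ξm (x i) * ufun τ η ξp ξm ℓ k i (x i) t) *
    ∏ p ∈ Finset.univ.filter fun p : Fin M × Fin M => p.1 < p.2,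
      hfun τ η (x p.1 + x p.2) * hfun τ η (x p.1 - x p.2)

/-- the weight function `w_k(x;t)`. -/
def wfun (τ η ξp ξm : ℂ) {N M : ℕ} (ℓ : Fin N → ℂ) (k : Fin M → Fin N) (x : Fin M → ℂ)
    (t : Fin N → ℂ) : ℂ :=
  PhiF τ η ξp ξm ℓ k t * w0 τ η ξp ξm ℓ k x t

/-- sign `ε_i = ±1` encoded by a boolean. -/
def sg {M : ℕ} (ε : Fin M → Bool) (i : Fin M) : ℂ := if ε i then 1 else -1

/-- `S_M k`: rearrangements of `k`. -/
def rearr {M N : ℕ} (k : Fin M → Fin N) : Finset (Fin M → Fin N) :=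
  Finset.univ.filter fun m => ∀ r, nk m r = nk k r

/-- `β_k(x;t)`, the coefficients of the boundary Bethe vectors. -/
def betaF (η ξm : ℂ) {N M : ℕ} (ℓ : Fin N → ℂ) (k : Fin M → Fin N) (x : Fin M → ℂ)
    (t : Fin N → ℂ) : ℂ :=
  exp ((∑ i, ((nk k (k i) : ℂ) / 2 - ℓ (k i))) * η) *
    ∑ m ∈ rearr k, ∑ ε : Fin M → Bool,
      (∏ i,
          sg ε i * sinh (sg ε i * x i - xiM η ξm) / sinh (t (m i) + sg ε i * x i - ℓ (m i) * η) *
            (∏ s ∈ Finset.univ.filter fun s : Fin N => m i < s,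
              sinh (t s + sg ε i * x i + ℓ s * η) / sinh (t s + sg ε i * x i - ℓ s * η)) *
            ∏ s, sinh (t s - sg ε i * x i + ℓ s * η) / sinh (t s - sg ε i * x i - ℓ s * η)) *
        (∏ p ∈ Finset.univ.filter fun p : Fin M × Fin M => p.1 < p.2,
          sinh (sg ε p.1 * x p.1 + sg ε p.2 * x p.2 + η) /
            sinh (sg ε p.1 * x p.1 + sg ε p.2 * x p.2)) *
        ∏ p ∈ Finset.univ.filter fun p : Fin M × Fin M => m p.1 < m p.2,
          sinh (sg ε p.1 * x p.1 - sg ε p.2 * x p.2 - η) /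
            sinh (sg ε p.1 * x p.1 - sg ε p.2 * x p.2)

/-- `(ℓ,η) ∈ D^k_{M,N}`. -/
def Dmn (η : ℂ) {N M : ℕ} (ℓ : Fin N → ℂ) (k : Fin M → Fin N) : Prop :=
  ∀ r, (ℓ r * η).re > max 0 (((nk k r : ℝ) - 1) / 2 * η.re)

/-- the (0-based) position `i_k(s;r) = ∑_{s' < r} n_k(s') + s`. -/
def blockIdx {M N : ℕ} (k : Fin M → Fin N) (r : Fin N) (s : ℕ) : ℕ :=
  (∑ s' ∈ Finset.univ.filter fun s' : Fin N => s' < r, nk k s') + s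

/-- `γ ∈ Γ^k_{M,N}`. -/
def Gam (η : ℂ) {N M : ℕ} (ℓ : Fin N → ℂ) (k : Fin M → Fin N) (γ : Fin M → ℂ) : Prop :=
  (∀ i, -(ℓ (k i) * η).re < (γ i).re ∧ (γ i).re < (ℓ (k i) * η).re) ∧
    ∀ r : Fin N, ∀ s : ℕ, s + 1 < nk k r →
      ∀ (h1 : blockIdx k r s < M) (h2 : blockIdx k r (s + 1) < M),
        (γ ⟨blockIdx k r (s + 1), h2⟩).re ≤ (γ ⟨blockIdx k r s, h1⟩).re ∧
          (γ ⟨blockIdx k r (s + 1), h2⟩).re + η.re < (γ ⟨blockIdx k r s, h1⟩).re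

/-- `γ ∈ Γ^k_{M,N;τ}`. -/
def GamTau (τ η : ℂ) {N M : ℕ} (ℓ : Fin N → ℂ) (k : Fin M → Fin N) (γ : Fin M → ℂ) : Prop :=
  Gam η ℓ k γ ∧
    (∀ i, -(ℓ (k i) * η + τ).re < (γ i).re ∧ (γ i).re < (ℓ (k i) * η + τ).re) ∧
    ∀ r : Fin N, ∀ s : ℕ, s + 1 < nk k r →
      ∀ (h1 : blockIdx k r s < M) (h2 : blockIdx k r (s + 1) < M),
        (γ ⟨blockIdx k r (s + 1), h2⟩).re + (η - τ).re < (γ ⟨blockIdx k r s, h1⟩).re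

/-- `Λ₊ = max_s Re(ℓ_s η)`. -/
def Lam (η : ℂ) {N : ℕ} (ℓ : Fin N → ℂ) : ℝ := ⨆ s, (ℓ s * η).re

/-- the sector `Ã`. -/
def Atil (τ η ξp ξm : ℂ) {N : ℕ} (ℓ : Fin N → ℂ) : Set (Fin N → ℂ) :=
  {t | (∀ i j : Fin N, (j : ℕ) = (i : ℕ) + 1 → (t i - t j).re > 2 * Lam η ℓ + max η.re 0) ∧
       ∀ i : Fin N, (i : ℕ) = N - 1 →
         (t i).re > Lam η ℓ + max (max (η / 2).re 0) (max (-xiP τ η ξp).re (-xiM η ξm).re)}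

/-- the sector `Ã_τ`. -/
def AtilTau (τ η ξp ξm : ℂ) {N : ℕ} (ℓ : Fin N → ℂ) : Set (Fin N → ℂ) :=
  {t | (∀ i j : Fin N, (j : ℕ) = (i : ℕ) + 1 →
          (t i - t j).re > 2 * Lam η ℓ + max η.re 0 - τ.re) ∧
       ∀ i : Fin N, (i : ℕ) = N - 1 →
         (t i).re > Lam η ℓ + max (max (η / 2).re 0) (max (-xiP τ η ξp).re (-xiM η ξm).re) - τ.re}

/-- the cone `Q₊ ⊂ ℤ^N` spanned by the simple roots `e_i - e_{i+1}` and `e_N`. -/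
def Qplus {N : ℕ} : Set (Fin N → ℤ) :=
  {α | ∃ β : Fin N → ℕ, ∀ j : Fin N,
    α j = (β j : ℤ) -
      if _h : 0 < (j : ℕ) then
        (β ⟨(j : ℕ) - 1, lt_of_le_of_lt (Nat.sub_le _ _) j.isLt⟩ : ℤ)
      else 0}

/-- the cube `[0,π]^M` over which the contour integrals are iterated. -/
def box (M : ℕ) : Set (Fin M → ℝ) := Set.univ.pi fun _ => Set.Icc (0 : ℝ) Real.pi

/-- the point of the contour `C^γ_k(t)` with parameters `s ∈ [0,π]^M`. -/
def cpt {M N : ℕ} (k : Fin M → Fin N) (γ : Fin M → ℂ) (t : Fin N → ℂ) (s : Fin M → ℝ) :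
    Fin M → ℂ := fun i => t (k i) + γ i + (s i : ℂ) * I

/-- the iterated contour integral over `C^γ_k(t)`. -/
def contourIntegral {M N : ℕ} (k : Fin M → Fin N) (γ : Fin M → ℂ) (t : Fin N → ℂ)
    (f : (Fin M → ℂ) → ℂ) : ℂ :=
  I ^ M * ∫ s in box M, f (cpt k γ t s)

/-- nonvanishing of all denominators occurring in `w_k(x;t)/Φ_k(t)`. -/
def w0DenomOK (τ η ξp ξm : ℂ) {N M : ℕ} (ℓ : Fin N → ℂ) (k : Fin M → Fin N) (x : Fin M → ℂ)
    (t : Fin N → ℂ) : Prop :=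
  (∀ s : Fin N, ∀ i : Fin M,
      poch (qsq τ) (exp (-2 * (t s + x i + ℓ s * η))) ≠ 0 ∧
      poch (qsq τ) (exp (-2 * (t s - x i + ℓ s * η))) ≠ 0) ∧
  (∀ i : Fin M,
      poch (qsq τ) (exp (2 * (-xiP τ η ξp - x i))) ≠ 0 ∧
      poch (qsq τ) (exp (2 * (-xiM η ξm - x i))) ≠ 0) ∧
  (∀ i : Fin M, ∀ s : Fin N, k i ≤ s → theta (qsq τ) (exp (2 * (x i - t s + ℓ s * η))) ≠ 0) ∧
  ∀ i j : Fin M, i < j →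
      poch (qsq τ) (exp (-2 * (x i + x j - η))) ≠ 0 ∧
      poch (qsq τ) (exp (-2 * (x i - x j - η))) ≠ 0

/-- nonvanishing of the theta denominators of `Φ_k(t)`. -/
def PhiDenomOK (τ η ξp ξm : ℂ) {N M : ℕ} (ℓ : Fin N → ℂ) (k : Fin M → Fin N)
    (t : Fin N → ℂ) : Prop :=
  ∀ r, theta (qsq τ) (phiC η ξp ξm ℓ k r * exp (2 * t r)) ≠ 0

/-- nonvanishing of all sinh denominators occurring in `β_m(x;t)` (for any rearrangement `m`). -/
def betaDenomOK (η : ℂ) {N M : ℕ} (ℓ : Fin N → ℂ) (x : Fin M → ℂ) (t : Fin N → ℂ) : Prop :=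
  (∀ s : Fin N, ∀ i : Fin M,
      sinh (t s + x i - ℓ s * η) ≠ 0 ∧ sinh (t s - x i - ℓ s * η) ≠ 0) ∧
  ∀ i j : Fin M, i < j → sinh (x i + x j) ≠ 0 ∧ sinh (x i - x j) ≠ 0

/-!
Every possible pole of `x_j ↦ w_k(x;t) β_m(x;t) / Φ_k(t)` lies on a vertical line `Re x_j = const`,
and some of these lines meet the strip. Those poles are removable: for each site `s ≥ k_j` the zeros
of `F` cancel half of the poles of `u`, and for `s > k_j` the zeros of `u` also cancel poles of `F`;
the factors `1 - e^{-2y}` of `h(x_i + x_{i'}) h(x_i - x_{i'})` cancel the denominators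
`sinh(ε_i x_i ± ε_{i'} x_{i'})` of `β`, because `sinh(a + b) sinh(a - b) = sinh² a - sinh² b` does
not depend on the signs of `a`, `b`. The remaining denominators are factors `(e^{2y};q²)_∞` with
`Re y < 0` and `sinh y` with `Re y ≠ 0`, none of which vanishes: the gaps `Re(t_s - t_{s+1})`
separate distinct sites, and the gaps of `γ` separate roots at the same site.

The periodicity holds factor by factor, since each factor is a function of `e^{2x_j}` or a ratio of
two values of `sinh` whose arguments are shifted together.
-/

section QFactorial

variable {E : Type*} [NormedAddCommGroup E] [NormedSpace ℂ E] {p τ : ℂ} {f : E → ℂ} {a : E}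

lemma summable_mul_norm_pow (hp : ‖p‖ < 1) (R : ℝ) : Summable fun n : ℕ => R * ‖p‖ ^ n :=
  (summable_geometric_of_lt_one (norm_nonneg p) hp).mul_left R

lemma differentiable_poch (hp : ‖p‖ < 1) : Differentiable ℂ (poch p) := by
  have on_ball (R : ℝ) : DifferentiableOn ℂ (poch p) (Metric.ball 0 R) := by
    have hprod : HasProdLocallyUniformlyOn (fun (n : ℕ) (z : ℂ) => 1 + -(z * p ^ n))
        (fun z => ∏' n : ℕ, (1 + -(z * p ^ n))) (Metric.ball 0 R) := by
      refine Summable.hasProdLocallyUniformlyOn_nat_one_add Metric.isOpen_ball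
        (summable_mul_norm_pow hp R) (.of_forall fun n z hz => ?_) fun n => by fun_prop
      rw [norm_neg, norm_mul, norm_pow]
      gcongr
      exact (mem_ball_zero_iff.1 hz).le
    refine (hprod.differentiableOn (.of_forall fun s => ?_) Metric.isOpen_ball).congr
      fun z _ => by simp only [poch, sub_eq_add_neg]
    simpa only [Finset.prod_fn] using DifferentiableOn.fun_finsetProd (by fun_prop)
  exact fun z => (on_ball (‖z‖ + 1)).differentiableAt (Metric.isOpen_ball.mem_nhds (by simp))

lemma poch_ne_zero (hp : ‖p‖ < 1) {z : ℂ} (hz : ‖z‖ < 1) : poch p z ≠ 0 := by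
  simp only [poch, sub_eq_add_neg]
  refine tprod_one_add_ne_zero_of_summable (fun n h => ?_)
    (by simpa using summable_mul_norm_pow hp ‖z‖)
  have hlt : ‖z * p ^ n‖ < 1 := by
    rw [norm_mul, norm_pow]
    exact mul_lt_one_of_nonneg_of_lt_one_left (norm_nonneg z) hz
      (pow_le_one₀ (norm_nonneg p) hp.le)
  have hone : z * p ^ n = 1 := by linear_combination -h
  simp [hone] at hlt

/-- The `q²`-shifted factorial `(e^{2y};q²)_∞` in the additive variable `y`. All infinite products
below are of this form: since `q² = e^{2τ}`, an extra factor `q²` is the shift `y ↦ y + τ`. -/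
def expPoch (τ y : ℂ) : ℂ := poch (qsq τ) (exp (2 * y))

lemma norm_exp_two_mul_lt_one {y : ℂ} (hy : y.re < 0) : ‖exp (2 * y)‖ < 1 := by
  rw [norm_exp, Real.exp_lt_one_iff, two_mul, add_re]
  linarith

lemma expPoch_ne_zero (hτ : τ.re < 0) {y : ℂ} (hy : y.re < 0) : expPoch τ y ≠ 0 :=
  poch_ne_zero (norm_exp_two_mul_lt_one hτ) (norm_exp_two_mul_lt_one hy)

@[fun_prop]
lemma analyticAt_expPoch_comp (hτ : τ.re < 0) (hf : AnalyticAt ℂ f a) :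
    AnalyticAt ℂ (fun z => expPoch τ (f z)) a :=
  ((differentiable_poch (norm_exp_two_mul_lt_one hτ)).analyticAt _).fun_comp (by fun_prop)

lemma exp_neg_two_mul (y : ℂ) : exp (-2 * y) = exp (2 * -y) := by ring_nf

lemma qsq_mul_exp_two_mul (τ y : ℂ) : qsq τ * exp (2 * y) = exp (2 * (τ + y)) := by
  rw [qsq, ← exp_add, mul_add]

lemma theta_exp_two_mul (τ y : ℂ) :
    theta (qsq τ) (exp (2 * y)) = expPoch τ y * expPoch τ (τ - y) := by
  rw [theta, ← exp_neg, ← mul_neg, qsq_mul_exp_two_mul, expPoch, expPoch, sub_eq_add_neg]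

@[fun_prop]
lemma analyticAt_theta_exp_comp (hτ : τ.re < 0) (hf : AnalyticAt ℂ f a) :
    AnalyticAt ℂ (fun z => theta (qsq τ) (exp (2 * f z))) a := by
  simp only [theta_exp_two_mul]
  fun_prop (disch := assumption)

lemma sinh_ne_zero_of_re_ne_zero {y : ℂ} (hy : y.re ≠ 0) : sinh y ≠ 0 := by
  intro h
  have hexp : exp y = exp (-y) := by
    rw [sinh] at h
    linear_combination 2 * h
  have hnorm : y.re = -y.re := by
    simpa only [norm_exp, neg_re, Real.exp_eq_exp] using congrArg norm hexp
  exact hy (self_eq_neg.1 hnorm)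

end QFactorial

section BetheCoefficients

variable {ι κ R : Type*} [LinearOrder ι] [Fintype ι] [LinearOrder κ] [CommMonoid R]

lemma prod_filter_comp_lt (m : ι → κ) (f : ι × ι → R) :
    ∏ p with m p.1 < m p.2, f p =
      ∏ p : ι × ι with p.1 < p.2,
        (if m p.1 < m p.2 then f p else if m p.2 < m p.1 then f p.swap else 1) := by
  have split_off_diag (p : ι × ι) : (if m p.1 < m p.2 then f p else 1) =
      (if p.1 < p.2 then if m p.1 < m p.2 then f p else 1 else 1) *
        if p.2 < p.1 then if m p.1 < m p.2 then f p else 1 else 1 := by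
    rcases lt_trichotomy p.1 p.2 with h | h | h <;> simp [h, h.not_gt]
  rw [Finset.prod_filter, Finset.prod_congr rfl fun p _ => split_off_diag p,
    Finset.prod_mul_distrib, ← (Equiv.prodComm ι ι).prod_comp
      fun p => if p.2 < p.1 then if m p.1 < m p.2 then f p else 1 else 1,
    ← Finset.prod_mul_distrib, Finset.prod_filter]
  refine Finset.prod_congr rfl fun p _ => ?_
  rcases lt_trichotomy (m p.1) (m p.2) with h | h | h <;> simp [h, h.not_gt]

variable {M N : ℕ}

/-- The contribution to `β` of one Bethe root `x` with sign `σ` at the site `r`, as a function of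
`y = σ x`. -/
def betaSite (η ξm : ℂ) (ℓ t : Fin N → ℂ) (r : Fin N) (σ y : ℂ) : ℂ :=
  σ * sinh (y - xiM η ξm) / sinh (t r + y - ℓ r * η) *
    (∏ s ∈ Finset.univ.filter fun s => r < s,
      sinh (t s + y + ℓ s * η) / sinh (t s + y - ℓ s * η)) *
    ∏ s, sinh (t s - y + ℓ s * η) / sinh (t s - y - ℓ s * η)

/-- The contribution to `β` of two signed Bethe roots `a`, `b` (in this order) at the sites `r`,
`r'`. -/
def betaPair (η : ℂ) (r r' : Fin N) (a b : ℂ) : ℂ :=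
  sinh (a + b + η) / sinh (a + b) *
    if r < r' then sinh (a - b - η) / sinh (a - b)
    else if r' < r then sinh (b - a - η) / sinh (b - a) else 1

lemma betaF_eq (η ξm : ℂ) (ℓ : Fin N → ℂ) (k : Fin M → Fin N) (x : Fin M → ℂ) (t : Fin N → ℂ) :
    betaF η ξm ℓ k x t =
      exp ((∑ i, ((nk k (k i) : ℂ) / 2 - ℓ (k i))) * η) *
        ∑ m ∈ rearr k, ∑ ε : Fin M → Bool,
          (∏ i, betaSite η ξm ℓ t (m i) (sg ε i) (sg ε i * x i)) *
            ∏ p ∈ Finset.univ.filter fun p : Fin M × Fin M => p.1 < p.2,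
              betaPair η (m p.1) (m p.2) (sg ε p.1 * x p.1) (sg ε p.2 * x p.2) := by
  simp only [betaF, betaSite, betaPair, Finset.prod_mul_distrib (s := Finset.univ.filter _),
    prod_filter_comp_lt, Prod.fst_swap, Prod.snd_swap, ← mul_assoc]

end BetheCoefficients

section Periodicity

open scoped Real

variable {M N : ℕ} {τ η ξp ξm y y' : ℂ} {ℓ t : Fin N → ℂ} {k : Fin M → Fin N} {i : Fin M}
  {x x' : Fin M → ℂ} {r r' : Fin N} {σ a a' b b' : ℂ}

lemma exp_two_mul_congr (h : y ≡ y' [PMOD π * I]) : exp (2 * y) = exp (2 * y') := by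
  obtain ⟨n, rfl⟩ := AddCommGroup.modEq_iff_eq_add_zsmul.1 h
  have hshift : 2 * (y + n • (π * I)) = 2 * y + n * (2 * π * I) := by
    rw [zsmul_eq_mul]
    ring
  rw [hshift, exp_periodic.int_mul n]

lemma exp_neg_two_mul_congr (h : y ≡ y' [PMOD π * I]) : exp (-2 * y) = exp (-2 * y') := by
  simpa only [exp_neg_two_mul] using exp_two_mul_congr h.neg

lemma sinh_div_sinh_congr (h : a ≡ a' [PMOD π * I]) (hab : a - b = a' - b') :
    sinh a / sinh b = sinh a' / sinh b' := by
  obtain ⟨n, rfl⟩ := AddCommGroup.modEq_iff_eq_add_zsmul.1 h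
  obtain rfl : b' = b + n • (π * I) := by linear_combination hab
  rw [sinh_antiperiodic.add_zsmul_eq, sinh_antiperiodic.add_zsmul_eq]
  rcases Int.units_eq_one_or n.negOnePow with hn | hn <;> simp [hn]

lemma Ffun_congr (h : y ≡ y' [PMOD π * I]) : Ffun τ η ℓ y t = Ffun τ η ℓ y' t := by
  simp only [Ffun,
    fun a b => exp_neg_two_mul_congr ((h.add_left a).sub_right b),
    fun a b => exp_neg_two_mul_congr ((h.add_left a).add_right b),
    fun a b => exp_neg_two_mul_congr ((h.sub_left a).sub_right b),
    fun a b => exp_neg_two_mul_congr ((h.sub_left a).add_right b)]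

lemma gfun_congr (h : y ≡ y' [PMOD π * I]) : gfun τ η ξp ξm y = gfun τ η ξp ξm y' := by
  simp only [gfun, fun a => exp_two_mul_congr (h.sub_left a)]

lemma hfun_congr (h : y ≡ y' [PMOD π * I]) : hfun τ η y = hfun τ η y' := by
  rw [hfun, hfun, exp_neg_two_mul_congr h, exp_neg_two_mul_congr (h.add_right η),
    exp_neg_two_mul_congr (h.sub_right η)]

lemma ufun_congr (h : y ≡ y' [PMOD π * I]) :
    ufun τ η ξp ξm ℓ k i y t = ufun τ η ξp ξm ℓ k i y' t := by
  simp only [ufun,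
    fun a b => exp_two_mul_congr ((h.sub_right a).add_right b),
    fun a b => exp_two_mul_congr ((h.sub_right a).sub_right b)]

lemma w0_congr (h : ∀ i, x i ≡ x' i [PMOD π * I]) :
    w0 τ η ξp ξm ℓ k x t = w0 τ η ξp ξm ℓ k x' t := by
  unfold w0
  congr! 2 with i _ p _
  · rw [Ffun_congr (h i), gfun_congr (h i), ufun_congr (h i)]
  · rw [hfun_congr ((h p.1).add (h p.2)), hfun_congr ((h p.1).sub (h p.2))]

lemma sg_eq_one_or_neg_one (ε : Fin M → Bool) (i : Fin M) : sg ε i = 1 ∨ sg ε i = -1 := by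
  cases h : ε i <;> simp [sg, h]

lemma sg_mul_modEq (ε : Fin M → Bool) (h : y ≡ y' [PMOD π * I]) :
    sg ε i * y ≡ sg ε i * y' [PMOD π * I] := by
  rcases sg_eq_one_or_neg_one ε i with hs | hs <;> simpa [hs] using h

lemma betaSite_congr (h : y ≡ y' [PMOD π * I]) :
    betaSite η ξm ℓ t r σ y = betaSite η ξm ℓ t r σ y' := by
  have add_side (s) (c d : ℂ) : sinh (t s + y + c) / sinh (t s + y - d) =
      sinh (t s + y' + c) / sinh (t s + y' - d) :=
    sinh_div_sinh_congr ((h.add_left _).add_right _) (by ring)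
  have sub_side (s) (c d : ℂ) : sinh (t s - y + c) / sinh (t s - y - d) =
      sinh (t s - y' + c) / sinh (t s - y' - d) :=
    sinh_div_sinh_congr ((h.sub_left _).add_right _) (by ring)
  simp only [betaSite, mul_div_assoc, add_side, sub_side]
  rw [sinh_div_sinh_congr (b' := t r + y' - ℓ r * η) (h.sub_right _) (by ring)]

lemma betaPair_congr (ha : a ≡ a' [PMOD π * I]) (hb : b ≡ b' [PMOD π * I]) :
    betaPair η r r' a b = betaPair η r r' a' b' := by
  have hadd : sinh (a + b + η) / sinh (a + b) = sinh (a' + b' + η) / sinh (a' + b') :=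
    sinh_div_sinh_congr ((ha.add hb).add_right η) (by ring)
  have hsub {c d c' d' : ℂ} (hc : c ≡ c' [PMOD π * I]) (hd : d ≡ d' [PMOD π * I]) :
      sinh (c - d - η) / sinh (c - d) = sinh (c' - d' - η) / sinh (c' - d') :=
    sinh_div_sinh_congr ((hc.sub hd).sub_right η) (by ring)
  rw [betaPair, betaPair, hadd, hsub ha hb, hsub hb ha]

lemma betaF_congr (h : ∀ i, x i ≡ x' i [PMOD π * I]) :
    betaF η ξm ℓ k x t = betaF η ξm ℓ k x' t := by
  have hs (ε i) : sg ε i * x i ≡ sg ε i * x' i [PMOD π * I] := sg_mul_modEq ε (h i)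
  simp only [betaF_eq, betaSite_congr (hs _ _), betaPair_congr (hs _ _) (hs _ _)]

end Periodicity

section CancelledIntegrand

variable {M N : ℕ} {τ η ξp ξm a b y y' : ℂ} {ℓ t : Fin N → ℂ} {k : Fin M → Fin N} {r r' s : Fin N}

/-- The `s`-th factor of `F(x;t)` containing `y = x - t_s`, multiplied by the `s`-th theta factors
of `u_{k;i}(x;t)` for `k_i = r`, with the common zeros removed; here `a = ℓ_s η`. -/
def regSite (τ a : ℂ) (r s : Fin N) (y : ℂ) : ℂ :=
  if s < r then expPoch τ (y + a) / expPoch τ (y - a)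
  else if s = r then 1 / (expPoch τ (y - a) * expPoch τ (τ - y - a))
  else expPoch τ (τ - y + a) / expPoch τ (τ - y - a)

lemma mul_theta_div_theta_eq_regSite (hpole : expPoch τ (y - a) ≠ 0)
    (htheta : r ≤ s → theta (qsq τ) (exp (2 * (y + a))) ≠ 0) :
    expPoch τ (y + a) / expPoch τ (y - a) *
        ((if r < s then theta (qsq τ) (exp (2 * (y - a))) else 1) /
          if r ≤ s then theta (qsq τ) (exp (2 * (y + a))) else 1) =
      regSite τ a r s y := by
  have hsub : τ - (y - a) = τ - y + a := by ring
  have hadd : τ - (y + a) = τ - y - a := by ring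
  simp only [theta_exp_two_mul, hsub, hadd, mul_ne_zero_iff, regSite] at htheta ⊢
  rcases lt_trichotomy s r with h | rfl | h
  · simp [h, h.not_gt, h.not_ge]
  · obtain ⟨hnum, hden⟩ := htheta le_rfl
    simp only [lt_irrefl, le_refl, if_true, if_false]
    field_simp
  · obtain ⟨hnum, hden⟩ := htheta h.le
    simp only [h, h.le, h.not_gt, h.ne', if_true, if_false]
    field_simp

/-- The factor `F(x_i;t) g(x_i) u_{k;i}(x_i;t)` of the weight function, with the common zeros
removed. -/
def regWeight (τ η ξp ξm : ℂ) (ℓ : Fin N → ℂ) (k : Fin M → Fin N) (i : Fin M) (t : Fin N → ℂ)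
    (x : ℂ) : ℂ :=
  gfun τ η ξp ξm x *
    (exp (-t (k i)) * theta (qsq τ) (exp (2 * (x - t (k i) + psiC τ η ξp ξm ℓ k i)))) *
    ∏ s, expPoch τ (-(t s + x) + ℓ s * η) / expPoch τ (-(t s + x) - ℓ s * η) *
      regSite τ (ℓ s * η) (k i) s (x - t s)

lemma Ffun_eq_prod_expPoch (x : ℂ) :
    Ffun τ η ℓ x t =
      ∏ s, expPoch τ (-(t s + x) + ℓ s * η) / expPoch τ (-(t s + x) - ℓ s * η) *
        (expPoch τ (x - t s + ℓ s * η) / expPoch τ (x - t s - ℓ s * η)) := by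
  refine Finset.prod_congr rfl fun s _ => ?_
  simp only [exp_neg_two_mul, div_mul_div_comm, expPoch]
  ring_nf

lemma weight_eq_regWeight {i : Fin M} {x : ℂ}
    (hpole : ∀ s, poch (qsq τ) (exp (-2 * (t s - x + ℓ s * η))) ≠ 0)
    (htheta : ∀ s, k i ≤ s → theta (qsq τ) (exp (2 * (x - t s + ℓ s * η))) ≠ 0) :
    Ffun τ η ℓ x t * gfun τ η ξp ξm x * ufun τ η ξp ξm ℓ k i x t =
      regWeight τ η ξp ξm ℓ k i t x := by
  have hpole' (s) : expPoch τ (x - t s - ℓ s * η) ≠ 0 := by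
    have hs := hpole s
    rwa [exp_neg_two_mul, show -(t s - x + ℓ s * η) = x - t s - ℓ s * η by ring] at hs
  simp only [regWeight, ← mul_theta_div_theta_eq_regSite (hpole' _) (htheta _), ← mul_assoc,
    Finset.prod_mul_distrib, Finset.prod_div_distrib, Ffun_eq_prod_expPoch, ufun,
    Finset.prod_filter]
  ring

/-- The quotient `h(y) / sinh y`. -/
def hRegular (τ η y : ℂ) : ℂ := 2 * exp (-y) * expPoch τ (τ - y - η) / expPoch τ (η - y)

lemma hfun_eq_sinh_mul_hRegular (y : ℂ) : hfun τ η y = sinh y * hRegular τ η y := by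
  have hsinh : 1 - exp (-2 * y) = sinh y * (2 * exp (-y)) := by
    have hexp : exp y * exp (-y) = 1 := by rw [← exp_add, add_neg_cancel, exp_zero]
    rw [sinh, show -2 * y = -y + -y by ring, exp_add]
    linear_combination -hexp
  rw [hfun, hsinh, exp_neg_two_mul, exp_neg_two_mul, qsq_mul_exp_two_mul, hRegular, expPoch,
    expPoch]
  ring_nf

lemma sinh_add_mul_sinh_sub (y y' : ℂ) :
    sinh (y + y') * sinh (y - y') = sinh y ^ 2 - sinh y' ^ 2 := by
  rw [sinh_add, sinh_sub]
  linear_combination sinh y ^ 2 * cosh_sq y' - sinh y' ^ 2 * cosh_sq y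

/-- The factor of `w_k β_m` belonging to the roots `y`, `y'` at the sites `r`, `r'`, with
`a = ± y` and `b = ± y'` and with the zeros of `h` removed against the poles of `β`. -/
def regPair (τ η : ℂ) (r r' : Fin N) (y y' a b : ℂ) : ℂ :=
  hRegular τ η (y + y') * hRegular τ η (y - y') *
    (sinh (a + b + η) * if r < r' then sinh (a - b - η)
      else if r' < r then sinh (a - b + η) else sinh (a - b))

lemma hfun_mul_betaPair (ha : sinh a ^ 2 = sinh y ^ 2) (hb : sinh b ^ 2 = sinh y' ^ 2)
    (hadd : sinh (y + y') ≠ 0) (hsub : sinh (y - y') ≠ 0) :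
    hfun τ η (y + y') * hfun τ η (y - y') * betaPair η r r' a b = regPair τ η r r' y y' a b := by
  have hsinh : sinh (y + y') * sinh (y - y') = sinh (a + b) * sinh (a - b) := by
    rw [sinh_add_mul_sinh_sub, sinh_add_mul_sinh_sub, ha, hb]
  obtain ⟨hadd', hsub'⟩ := mul_ne_zero_iff.1 (hsinh ▸ mul_ne_zero hadd hsub)
  have hswap : sinh (b - a - η) / sinh (b - a) = sinh (a - b + η) / sinh (a - b) := by
    rw [← neg_sub a b, ← neg_add', sinh_neg, sinh_neg, neg_div_neg_eq]
  rw [hfun_eq_sinh_mul_hRegular, hfun_eq_sinh_mul_hRegular, mul_mul_mul_comm, hsinh, betaPair,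
    hswap, regPair]
  split_ifs <;> field_simp

lemma sinh_sg_mul_sq (ε : Fin M → Bool) (i : Fin M) (y : ℂ) :
    sinh (sg ε i * y) ^ 2 = sinh y ^ 2 := by
  rcases sg_eq_one_or_neg_one ε i with h | h <;> simp [h]

/-- The product `w_k(x;t) β_m(x;t) / Φ_k(t)` with the removable singularities removed. -/
def regIntegrand (τ η ξp ξm : ℂ) (ℓ : Fin N → ℂ) (k m : Fin M → Fin N) (t : Fin N → ℂ)
    (x : Fin M → ℂ) : ℂ :=
  exp ((∑ i, ((nk m (m i) : ℂ) / 2 - ℓ (m i))) * η) *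
    ∑ m' ∈ rearr m, ∑ ε : Fin M → Bool,
      (∏ i, regWeight τ η ξp ξm ℓ k i t (x i) *
        betaSite η ξm ℓ t (m' i) (sg ε i) (sg ε i * x i)) *
        ∏ p ∈ Finset.univ.filter fun p : Fin M × Fin M => p.1 < p.2,
          regPair τ η (m' p.1) (m' p.2) (x p.1) (x p.2) (sg ε p.1 * x p.1) (sg ε p.2 * x p.2)

lemma regIntegrand_eq_w0_mul_betaF (m : Fin M → Fin N) {x : Fin M → ℂ}
    (hw : w0DenomOK τ η ξp ξm ℓ k x t) (hb : betaDenomOK η ℓ x t) :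
    regIntegrand τ η ξp ξm ℓ k m t x = w0 τ η ξp ξm ℓ k x t * betaF η ξm ℓ m x t := by
  obtain ⟨hF, -, htheta, -⟩ := hw
  have hweight (i) := weight_eq_regWeight (ξp := ξp) (ξm := ξm) (fun s => (hF s i).2) (htheta i)
  have hpair (m' : Fin M → Fin N) (ε) : ∀ p ∈ Finset.univ.filter fun p : Fin M × Fin M => p.1 < p.2,
      regPair τ η (m' p.1) (m' p.2) (x p.1) (x p.2) (sg ε p.1 * x p.1) (sg ε p.2 * x p.2) =
        hfun τ η (x p.1 + x p.2) * hfun τ η (x p.1 - x p.2) *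
          betaPair η (m' p.1) (m' p.2) (sg ε p.1 * x p.1) (sg ε p.2 * x p.2) := fun p hp =>
    have hne := hb.2 p.1 p.2 (Finset.mem_filter.1 hp).2
    (hfun_mul_betaPair (sinh_sg_mul_sq ε _ _) (sinh_sg_mul_sq ε _ _) hne.1 hne.2).symm
  rw [betaF_eq, regIntegrand, mul_left_comm]
  congr 1
  simp only [Finset.mul_sum]
  refine Finset.sum_congr rfl fun m' _ => Finset.sum_congr rfl fun ε _ => ?_
  simp only [w0, hweight, Finset.prod_congr rfl (hpair m' ε), Finset.prod_mul_distrib]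
  ring

end CancelledIntegrand

section Analyticity

variable {M N : ℕ} {τ η ξp ξm : ℂ} {ℓ t : Fin N → ℂ} {k : Fin M → Fin N} {i : Fin M}
  {r : Fin N} {E : Type*} [NormedAddCommGroup E] [NormedSpace ℂ E] {f g u v : E → ℂ} {z : E}

/-- The conditions on a root `y` attached to the site `r` under which no denominator of the
cancelled one-root factors vanishes: the poles in `y` lie in rows `Re y = const`, and `y` is kept
within the gap around `t_r`. -/
structure SiteRegular (τ η ξp ξm : ℂ) (ℓ t : Fin N → ℂ) (r : Fin N) (y : ℂ) : Prop where
  add (s : Fin N) : |(ℓ s * η).re| < (t s + y).re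
  left (s : Fin N) (hs : s < r) : |(ℓ s * η).re| < (t s - y).re
  self : |(y - t r).re| < (ℓ r * η).re
  right (s : Fin N) (hs : r < s) : |(ℓ s * η).re| < (y - t s).re
  xiP_add : 0 < (xiP τ η ξp + y).re
  xiM_add : 0 < (xiM η ξm + y).re

/-- A set of root configurations `x ∈ ℂ^M` at which the cancelled integrand is analytic. -/
def regDomain (τ η ξp ξm : ℂ) (ℓ : Fin N → ℂ) (k : Fin M → Fin N) (t : Fin N → ℂ) :
    Set (Fin M → ℂ) :=
  {x | (∀ i, SiteRegular τ η ξp ξm ℓ t (k i) (x i)) ∧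
    ∀ i i', i < i' → η.re < (x i + x i').re ∧ η.re < (x i - x i').re}

lemma gfun_eq_expPoch (y : ℂ) :
    gfun τ η ξp ξm y =
      expPoch τ (τ + (xiP τ η ξp - y)) * expPoch τ (τ + (xiM η ξm - y)) /
        (expPoch τ (-xiP τ η ξp - y) * expPoch τ (-xiM η ξm - y)) := by
  simp only [gfun, expPoch, qsq_mul_exp_two_mul]

namespace SiteRegular

lemma analyticAt_gfun_comp (hτ : τ.re < 0) (hf : AnalyticAt ℂ f z)
    (h : SiteRegular τ η ξp ξm ℓ t r (f z)) :
    AnalyticAt ℂ (fun w => gfun τ η ξp ξm (f w)) z := by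
  have hne {c : ℂ} (hc : 0 < (c + f z).re) : expPoch τ (-c - f z) ≠ 0 :=
    expPoch_ne_zero hτ (by rwa [← neg_add', neg_re, neg_lt_zero])
  simp only [gfun_eq_expPoch]
  exact .fun_div (by fun_prop (disch := assumption)) (by fun_prop (disch := assumption))
    (mul_ne_zero (hne h.xiP_add) (hne h.xiM_add))

lemma analyticAt_regSite_comp (hτ : τ.re < 0) (hf : AnalyticAt ℂ f z)
    (h : SiteRegular τ η ξp ξm ℓ t r (f z)) (s : Fin N) :
    AnalyticAt ℂ (fun w => regSite τ (ℓ s * η) r s (f w - t s)) z := by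
  rcases lt_trichotomy s r with hs | rfl | hs
  · have hne : expPoch τ (f z - t s - ℓ s * η) ≠ 0 := expPoch_ne_zero hτ <| by
      have hgap := (abs_lt.1 (h.left s hs)).1
      simp only [sub_re] at hgap ⊢
      linarith
    simp only [regSite, hs, if_true]
    exact .fun_div (by fun_prop (disch := assumption)) (by fun_prop (disch := assumption)) hne
  · obtain ⟨hlo, hhi⟩ := abs_lt.1 h.self
    have hne : expPoch τ (f z - t s - ℓ s * η) ≠ 0 := expPoch_ne_zero hτ <| by
      rw [sub_re]
      linarith
    have hne' : expPoch τ (τ - (f z - t s) - ℓ s * η) ≠ 0 := expPoch_ne_zero hτ <| by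
      rw [sub_re, sub_re]
      linarith
    simp only [regSite, lt_irrefl, if_true, if_false]
    exact .fun_div analyticAt_const (by fun_prop (disch := assumption)) (mul_ne_zero hne hne')
  · have hne : expPoch τ (τ - (f z - t s) - ℓ s * η) ≠ 0 := expPoch_ne_zero hτ <| by
      have hgap := (abs_lt.1 (h.right s hs)).1
      rw [sub_re, sub_re]
      linarith
    simp only [regSite, hs.not_gt, hs.ne', if_false]
    exact .fun_div (by fun_prop (disch := assumption)) (by fun_prop (disch := assumption)) hne

lemma analyticAt_regWeight_comp (hτ : τ.re < 0) (hf : AnalyticAt ℂ f z)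
    (h : SiteRegular τ η ξp ξm ℓ t (k i) (f z)) :
    AnalyticAt ℂ (fun w => regWeight τ η ξp ξm ℓ k i t (f w)) z := by
  have hne (s) : expPoch τ (-(t s + f z) - ℓ s * η) ≠ 0 := expPoch_ne_zero hτ <| by
    have hgap := (abs_lt.1 (h.add s)).1
    rw [sub_re, neg_re]
    linarith
  refine .fun_mul (.fun_mul (h.analyticAt_gfun_comp hτ hf) (by fun_prop (disch := assumption)))
    (Finset.analyticAt_fun_prod _ fun s _ =>
      .fun_mul (.fun_div ?_ ?_ (hne s)) (h.analyticAt_regSite_comp hτ hf s))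
  all_goals fun_prop (disch := assumption)

lemma sinh_add_ne_zero {y : ℂ} (h : SiteRegular τ η ξp ξm ℓ t r y) (s : Fin N) :
    sinh (t s + y - ℓ s * η) ≠ 0 :=
  sinh_ne_zero_of_re_ne_zero <| by
    rw [sub_re]
    exact (sub_pos.2 ((le_abs_self _).trans_lt (h.add s))).ne'

lemma sinh_sub_ne_zero {y : ℂ} (h : SiteRegular τ η ξp ξm ℓ t r y) (s : Fin N) :
    sinh (t s - y - ℓ s * η) ≠ 0 := by
  refine sinh_ne_zero_of_re_ne_zero ?_
  rw [sub_re, sub_ne_zero]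
  rcases lt_trichotomy s r with hs | rfl | hs
  · exact ((le_abs_self _).trans_lt (h.left s hs)).ne'
  · rw [← neg_sub y, neg_re]
    exact ((neg_le_abs _).trans_lt h.self).ne
  · rw [← neg_sub y, neg_re]
    exact (neg_lt_of_abs_lt (h.right s hs)).ne

lemma analyticAt_betaSite_comp (hf : AnalyticAt ℂ f z) (h : SiteRegular τ η ξp ξm ℓ t r (f z))
    (r' : Fin N) (ε : Fin M → Bool) (i : Fin M) :
    AnalyticAt ℂ (fun w => betaSite η ξm ℓ t r' (sg ε i) (sg ε i * f w)) z := by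
  have hadd (s) : sinh (t s + sg ε i * f z - ℓ s * η) ≠ 0 := by
    rcases sg_eq_one_or_neg_one ε i with hε | hε
    · simpa [hε] using h.sinh_add_ne_zero s
    · simpa [hε, ← sub_eq_add_neg] using h.sinh_sub_ne_zero s
  have hsub (s) : sinh (t s - sg ε i * f z - ℓ s * η) ≠ 0 := by
    rcases sg_eq_one_or_neg_one ε i with hε | hε
    · simpa [hε] using h.sinh_sub_ne_zero s
    · simpa [hε] using h.sinh_add_ne_zero s
  refine .fun_mul (.fun_mul (.fun_div ?_ ?_ (hadd r'))
    (Finset.analyticAt_fun_prod _ fun s _ => .fun_div ?_ ?_ (hadd s)))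
    (Finset.analyticAt_fun_prod _ fun s _ => .fun_div ?_ ?_ (hsub s))
  all_goals fun_prop

end SiteRegular

lemma analyticAt_hRegular_comp (hτ : τ.re < 0) (hf : AnalyticAt ℂ f z) (h : η.re < (f z).re) :
    AnalyticAt ℂ (fun w => hRegular τ η (f w)) z :=
  .fun_div (by fun_prop (disch := assumption)) (by fun_prop (disch := assumption))
    (expPoch_ne_zero hτ (by rwa [sub_re, sub_neg]))

lemma analyticAt_regPair_comp (hτ : τ.re < 0) (hf : AnalyticAt ℂ f z) (hg : AnalyticAt ℂ g z)
    (hu : AnalyticAt ℂ u z) (hv : AnalyticAt ℂ v z) (hadd : η.re < (f z + g z).re)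
    (hsub : η.re < (f z - g z).re) (r r' : Fin N) :
    AnalyticAt ℂ (fun w => regPair τ η r r' (f w) (g w) (u w) (v w)) z := by
  refine .fun_mul (.fun_mul (analyticAt_hRegular_comp hτ (hf.fun_add hg) hadd)
    (analyticAt_hRegular_comp hτ (hf.fun_sub hg) hsub)) (.fun_mul (by fun_prop) ?_)
  split_ifs <;> fun_prop

lemma analyticAt_regIntegrand_comp (hτ : τ.re < 0) {x : E → Fin M → ℂ}
    (hx : ∀ i, AnalyticAt ℂ (fun w => x w i) z) (h : x z ∈ regDomain τ η ξp ξm ℓ k t)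
    (m : Fin M → Fin N) :
    AnalyticAt ℂ (fun w => regIntegrand τ η ξp ξm ℓ k m t (x w)) z := by
  refine .fun_mul analyticAt_const (Finset.analyticAt_fun_sum _ fun m' _ =>
    Finset.analyticAt_fun_sum _ fun ε _ => .fun_mul
      (Finset.analyticAt_fun_prod _ fun i _ => .fun_mul
        ((h.1 i).analyticAt_regWeight_comp hτ (hx i))
        ((h.1 i).analyticAt_betaSite_comp (hx i) (m' i) ε i))
      (Finset.analyticAt_fun_prod _ fun p hp => ?_))
  obtain ⟨hadd, hsub⟩ := h.2 p.1 p.2 (Finset.mem_filter.1 hp).2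
  exact analyticAt_regPair_comp hτ (hx p.1) (hx p.2) (analyticAt_const.fun_mul (hx p.1))
    (analyticAt_const.fun_mul (hx p.2)) hadd hsub _ _

end Analyticity

section Strip

open Order Set

lemma add_lt_of_succ {α : Type*} [LinearOrder α] [SuccOrder α] [IsSuccArchimedean α] {g : α → ℝ}
    {c : ℝ} {a b : α} (hab : a < b)
    (hg : ∀ d ∈ Ico a b, g (succ d) ≤ g d ∧ g (succ d) + c < g d) : g b + c < g a := by
  have hanti : AntitoneOn g (Icc a b) := antitoneOn_of_succ_le ordConnected_Icc
    fun d hmax hd hsucc => (hg d ⟨hd.1, (lt_succ_of_not_isMax hmax).trans_le hsucc.2⟩).1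
  have hle : g b ≤ g (succ a) :=
    hanti ⟨le_succ a, succ_le_of_lt hab⟩ (right_mem_Icc.2 hab.le) (succ_le_of_lt hab)
  linarith [(hg a ⟨le_rfl, hab⟩).2]

lemma val_succ_of_lt {n : ℕ} {a b : Fin n} (hab : a < b) : ((succ a : Fin n) : ℕ) = a + 1 :=
  (Nat.covBy_iff_add_one_eq.1 (Fin.covBy_iff.1
    (covBy_succ_of_not_isMax (not_isMax_of_lt hab)))).symm

variable {M N : ℕ} {τ η ξp ξm : ℂ} {ℓ t : Fin N → ℂ} {k : Fin M → Fin N}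

lemma blockIdx_eq_card (k : Fin M → Fin N) (r : Fin N) (s : ℕ) :
    blockIdx k r s = (Finset.univ.filter fun a => k a < r).card + s := by
  rw [blockIdx, Finset.card_eq_sum_card_fiberwise (f := k)
    (t := Finset.univ.filter fun s' => s' < r) fun a ha => by simpa using ha]
  congr 1
  refine Finset.sum_congr rfl fun s' hs' => congrArg Finset.card ?_
  ext a
  simp only [Finset.mem_filter, Finset.mem_univ, true_and] at hs' ⊢
  exact ⟨fun h => ⟨h ▸ hs', h⟩, And.right⟩

lemma exists_blockIdx_eq (hk : Monotone k) {a b : Fin M} (hab : a < b) (hkab : k a = k b) :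
    ∃ s, s + 1 < nk k (k a) ∧ blockIdx k (k a) s = a := by
  simp only [blockIdx_eq_card]
  set C := (Finset.univ.filter fun d => k d < k a).card with hC
  have hlow : C ≤ (a : ℕ) := by
    rw [hC, ← Fin.card_Iio a]
    exact Finset.card_le_card fun d hd => Finset.mem_Iio.2 (hk.reflect_lt (by simpa using hd))
  have hhigh : (b : ℕ) + 1 ≤ C + nk k (k a) := by
    rw [hC, nk, ← Finset.card_union_of_disjoint, ← Fin.card_Iic b]
    · refine Finset.card_le_card fun d hd => ?_
      simpa [← le_iff_lt_or_eq, hkab] using hk (Finset.mem_Iic.1 hd)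
    · exact Finset.disjoint_filter.2 fun d _ => ne_of_lt
  exact ⟨a - C, by omega, by omega⟩

lemma Gam.re_add_lt {γ : Fin M → ℂ} (hγ : Gam η ℓ k γ) (hk : Monotone k) {a b : Fin M}
    (hab : a < b) (hkab : k a = k b) : (γ b).re + η.re < (γ a).re := by
  refine add_lt_of_succ (g := fun d => (γ d).re) hab fun d ⟨had, hdb⟩ => ?_
  have hkd : k d = k b := (hk hdb.le).antisymm (hkab ▸ hk had)
  obtain ⟨s, hs, hds⟩ := exists_blockIdx_eq hk hdb hkd
  have hsucc : blockIdx k (k d) (s + 1) = ((succ d : Fin M) : ℕ) := by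
    rw [val_succ_of_lt hdb, ← hds, blockIdx, blockIdx, add_assoc]
  simpa only [hds, hsucc] using hγ.2 (k d) s hs (hds ▸ d.2) (hsucc ▸ (succ d).2)

lemma le_Lam (η : ℂ) (ℓ : Fin N → ℂ) (s : Fin N) : (ℓ s * η).re ≤ Lam η ℓ :=
  le_ciSup (f := fun s => (ℓ s * η).re) (finite_range _).bddAbove s

/-- The constant `max(Re(η/2), 0, Re(-ξ̃₊), Re(-ξ̃₋))` in the definition of the sector `Ã_τ`. -/
def boundaryBound (τ η ξp ξm : ℂ) : ℝ :=
  max (max (η / 2).re 0) (max (-xiP τ η ξp).re (-xiM η ξm).re)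

lemma re_sub_gt_of_mem_AtilTau (hτ : τ.re < 0) (hℓ : ∀ r, 0 ≤ (ℓ r * η).re)
    (ht : t ∈ AtilTau τ η ξp ξm ℓ) {r s : Fin N} (hrs : r < s) :
    2 * Lam η ℓ + max η.re 0 - τ.re < (t r - t s).re := by
  have hΛ : 0 ≤ Lam η ℓ := (hℓ r).trans (le_Lam η ℓ r)
  have hη : 0 ≤ max η.re 0 := le_max_right _ _
  rw [sub_re, lt_sub_iff_add_lt']
  refine add_lt_of_succ (g := fun s => (t s).re) hrs fun d hd => ?_
  have hstep := ht.1 d (succ d) (val_succ_of_lt hd.2)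
  rw [sub_re] at hstep
  constructor <;> linarith

lemma re_gt_of_mem_AtilTau (hτ : τ.re < 0) (hℓ : ∀ r, 0 ≤ (ℓ r * η).re)
    (ht : t ∈ AtilTau τ η ξp ξm ℓ) (s : Fin N) :
    Lam η ℓ + boundaryBound τ η ξp ξm - τ.re < (t s).re := by
  rcases (Nat.le_sub_one_of_lt s.2).eq_or_lt with hs | hs
  · exact ht.2 s hs
  · have hlast := ht.2 ⟨N - 1, by omega⟩ rfl
    have hgap := re_sub_gt_of_mem_AtilTau hτ hℓ ht (show s < ⟨N - 1, by omega⟩ from hs)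
    have hΛ : 0 ≤ Lam η ℓ := (hℓ s).trans (le_Lam η ℓ s)
    have hη : 0 ≤ max η.re 0 := le_max_right _ _
    rw [sub_re] at hgap
    unfold boundaryBound
    linarith

/-- The shifted parameters `t + τ e_r`. -/
def shiftAt (τ : ℂ) (t : Fin N → ℂ) (r : Fin N) : Fin N → ℂ :=
  fun s => t s + if s = r then τ else 0

lemma shiftAt_re_mem_Icc (hτ : τ.re < 0) (t : Fin N → ℂ) (r s : Fin N) :
    (shiftAt τ t r s).re ∈ Icc ((t s).re + τ.re) (t s).re := by
  rw [shiftAt]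
  split_ifs <;> simp [hτ.le]

lemma boundaryBound_lt_re (hτ : τ.re < 0) (hℓ : ∀ r, 0 ≤ (ℓ r * η).re)
    (ht : t ∈ AtilTau τ η ξp ξm ℓ) {q r : Fin N} {g y : ℂ} (hg : |g.re| < (ℓ q * η + τ).re)
    (hy : (shiftAt τ t r q + g).re ≤ y.re) : boundaryBound τ η ξp ξm < y.re := by
  have hΛ := le_Lam η ℓ q
  have hlo := (abs_lt.1 hg).1
  have hshift := (shiftAt_re_mem_Icc hτ t r q).1
  have htq := re_gt_of_mem_AtilTau hτ hℓ ht q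
  rw [add_re] at hlo hy
  linarith

lemma siteRegular_of_mem_Icc (hτ : τ.re < 0) (hℓ : ∀ r, 0 ≤ (ℓ r * η).re)
    (ht : t ∈ AtilTau τ η ξp ξm ℓ) {q r : Fin N} {g y : ℂ} (hg : |g.re| < (ℓ q * η + τ).re)
    (hy : y.re ∈ Icc (shiftAt τ t r q + g).re (t q + g).re) :
    SiteRegular τ η ξp ξm ℓ (shiftAt τ t r) q y := by
  have hB := boundaryBound_lt_re hτ hℓ ht hg hy.1
  simp only [boundaryBound, max_lt_iff, neg_re] at hB
  obtain ⟨⟨-, hpos⟩, hP, hM⟩ := hB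
  have hB0 : 0 ≤ boundaryBound τ η ξp ξm := le_max_of_le_left (le_max_right _ _)
  have hη : 0 ≤ max η.re 0 := le_max_right _ _
  have hΛ := le_Lam η ℓ
  have hshift := shiftAt_re_mem_Icc hτ t r
  have hg' := abs_lt.1 hg
  simp only [add_re, mem_Icc] at hy hg' hshift
  refine ⟨fun s => ?_, fun s hs => ?_, ?_, fun s hs => ?_, ?_, ?_⟩
  · have hts := re_gt_of_mem_AtilTau hτ hℓ ht s
    rw [abs_of_nonneg (hℓ s), add_re]
    linarith [hΛ s, hshift s]
  · have hgap := re_sub_gt_of_mem_AtilTau hτ hℓ ht hs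
    rw [sub_re] at hgap
    rw [abs_of_nonneg (hℓ s), sub_re]
    linarith [hΛ s, hΛ q, hshift s]
  · rw [sub_re, abs_lt]
    constructor <;> linarith [hshift q]
  · have hgap := re_sub_gt_of_mem_AtilTau hτ hℓ ht hs
    rw [sub_re] at hgap
    rw [abs_of_nonneg (hℓ s), sub_re]
    linarith [hΛ s, hΛ q, hshift s, hshift q]
  · rw [add_re]
    linarith
  · rw [add_re]
    linarith

lemma mem_regDomain_of_mem_Icc (hτ : τ.re < 0) (hk : Monotone k) (hℓ : ∀ r, 0 ≤ (ℓ r * η).re)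
    {γ : Fin M → ℂ} (hγ : Gam η ℓ k γ) (hγτ : ∀ i, |(γ i).re| < (ℓ (k i) * η + τ).re)
    (ht : t ∈ AtilTau τ η ξp ξm ℓ) {r : Fin N} {y : Fin M → ℂ}
    (hy : ∀ i, (y i).re ∈ Icc (shiftAt τ t r (k i) + γ i).re (t (k i) + γ i).re)
    (hmono : ∀ i i', i < i' → k i = k i' → (γ i - γ i').re ≤ (y i - y i').re) :
    y ∈ regDomain τ η ξp ξm ℓ k (shiftAt τ t r) := by
  refine ⟨fun i => siteRegular_of_mem_Icc hτ hℓ ht (hγτ i) (hy i), fun i i' hii => ⟨?_, ?_⟩⟩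
  · have hB : (η / 2).re ≤ boundaryBound τ η ξp ξm := le_max_of_le_left (le_max_left _ _)
    have hi := boundaryBound_lt_re hτ hℓ ht (hγτ i) (hy i).1
    have hi' := boundaryBound_lt_re hτ hℓ ht (hγτ i') (hy i').1
    rw [div_ofNat_re] at hB
    rw [add_re]
    linarith
  · rcases (hk hii.le).eq_or_lt with hkk | hkk
    · have hgap := hγ.re_add_lt hk hii hkk
      have hdiff := hmono i i' hii hkk
      rw [sub_re] at hdiff
      linarith
    · have hgap := re_sub_gt_of_mem_AtilTau hτ hℓ ht hkk
      have hη : η.re ≤ max η.re 0 := le_max_left _ _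
      have hlo := (abs_lt.1 (hγτ i)).1
      have hhi := (abs_lt.1 (hγτ i')).2
      have hshift := (shiftAt_re_mem_Icc hτ t r (k i)).1
      have hyi := (hy i).1
      have hyi' := (hy i').2
      simp only [add_re, sub_re] at hgap hlo hhi hyi hyi' ⊢
      linarith [le_Lam η ℓ (k i), le_Lam η ℓ (k i')]

end Strip

section IntegrandContinuation

variable {M N : ℕ} {τ η ξp ξm : ℂ} {ℓ t : Fin N → ℂ} {k : Fin M → Fin N} {γ x : Fin M → ℂ}
  {j : Fin M}

lemma analyticAt_update_apply (x : Fin M → ℂ) (j i : Fin M) (z : ℂ) :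
    AnalyticAt ℂ (fun w => Function.update x j w i) z := by
  rcases eq_or_ne i j with rfl | h
  · simp only [Function.update_self]
    fun_prop
  · simpa only [Function.update_of_ne h] using analyticAt_const

lemma update_mem_regDomain (hτ : τ.re < 0) (hk : Monotone k) (hℓ : ∀ r, 0 ≤ (ℓ r * η).re)
    (hγ : Gam η ℓ k γ) (hγτ : ∀ i, |(γ i).re| < (ℓ (k i) * η + τ).re)
    (ht : t ∈ AtilTau τ η ξp ξm ℓ)
    (hxlt : ∀ i < j, (x i).re = (t (k i) + γ i).re)
    (hxgt : ∀ i, j < i → (x i).re = (t (k i) + γ i + if k i = k j then τ else 0).re)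
    {z : ℂ} (hz : z.re ∈ Set.Icc (t (k j) + γ j + τ).re (t (k j) + γ j).re) :
    Function.update x j z ∈ regDomain τ η ξp ξm ℓ k (shiftAt τ t (k j)) := by
  have hlt {i} (hi : i < j) : (Function.update x j z i).re = (t (k i) + γ i).re := by
    rw [Function.update_of_ne hi.ne, hxlt i hi]
  have hgt {i} (hi : j < i) :
      (Function.update x j z i).re = (shiftAt τ t (k j) (k i) + γ i).re := by
    rw [Function.update_of_ne hi.ne', hxgt i hi, shiftAt, add_right_comm]
  have hself : (Function.update x j z j).re ∈
      Set.Icc (shiftAt τ t (k j) (k j) + γ j).re (t (k j) + γ j).re := by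
    rwa [Function.update_self, shiftAt, if_pos rfl, add_right_comm]
  have hshift (i) : (shiftAt τ t (k j) (k i) + γ i).re ≤ (t (k i) + γ i).re := by
    simpa only [add_re, add_le_add_iff_right] using (shiftAt_re_mem_Icc hτ t (k j) (k i)).2
  have hmem (i) : (Function.update x j z i).re ∈
      Set.Icc (shiftAt τ t (k j) (k i) + γ i).re (t (k i) + γ i).re := by
    rcases lt_trichotomy i j with hi | rfl | hi
    · exact ⟨(hshift i).trans_eq (hlt hi).symm, (hlt hi).le⟩
    · exact hself
    · exact ⟨(hgt hi).ge, (hgt hi).trans_le (hshift i)⟩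
  refine mem_regDomain_of_mem_Icc hτ hk hℓ hγ hγτ ht hmem fun i i' hii hkk => ?_
  rw [sub_re, sub_re]
  rcases lt_or_ge i j with hi | hi
  · have hi' := (hmem i').2
    rw [hlt hi, add_re]
    rw [← hkk, add_re] at hi'
    linarith
  · have hi' := (hmem i).1
    rw [hgt (hi.trans_lt hii), add_re]
    rw [hkk, add_re] at hi'
    linarith

lemma w0_mul_betaF_update_add_pi_mul_I (m : Fin M → Fin N) (x : Fin M → ℂ) (j : Fin M) (z : ℂ) :
    w0 τ η ξp ξm ℓ k (Function.update x j (z + Real.pi * I)) t *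
        betaF η ξm ℓ m (Function.update x j (z + Real.pi * I)) t =
      w0 τ η ξp ξm ℓ k (Function.update x j z) t * betaF η ξm ℓ m (Function.update x j z) t := by
  have h (i) : Function.update x j (z + Real.pi * I) i ≡ Function.update x j z i
      [PMOD Real.pi * I] := by
    rcases eq_or_ne i j with rfl | hi
    · simp
    · rw [Function.update_of_ne hi, Function.update_of_ne hi]
  rw [w0_congr h, betaF_congr h]

end IntegrandContinuation

theorem stmt14_general {M N : ℕ} {τ η ξp ξm : ℂ} {ℓ t : Fin N → ℂ} {k : Fin M → Fin N}
    {γ x : Fin M → ℂ} {j : Fin M} (hτ : τ.re < 0) (hk : Monotone k)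
    (hℓ : ∀ r, 0 ≤ (ℓ r * η).re) (hγ : Gam η ℓ k γ)
    (hγτ : ∀ i, |(γ i).re| < (ℓ (k i) * η + τ).re) (ht : t ∈ AtilTau τ η ξp ξm ℓ)
    (hxlt : ∀ i < j, (x i).re = (t (k i) + γ i).re)
    (hxgt : ∀ i, j < i → (x i).re = (t (k i) + γ i + if k i = k j then τ else 0).re)
    (m : Fin M → Fin N) :
    (∀ z : ℂ,
      w0 τ η ξp ξm ℓ k (Function.update x j (z + Real.pi * I)) (shiftAt τ t (k j)) *
          betaF η ξm ℓ m (Function.update x j (z + Real.pi * I)) (shiftAt τ t (k j)) =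
        w0 τ η ξp ξm ℓ k (Function.update x j z) (shiftAt τ t (k j)) *
          betaF η ξm ℓ m (Function.update x j z) (shiftAt τ t (k j))) ∧
      ∃ U : Set ℂ, IsOpen U ∧
        {z : ℂ | (t (k j) + γ j + τ).re ≤ z.re ∧ z.re ≤ (t (k j) + γ j).re} ⊆ U ∧
        ∃ G : ℂ → ℂ, DifferentiableOn ℂ G U ∧
          ∀ z ∈ U,
            w0DenomOK τ η ξp ξm ℓ k (Function.update x j z) (shiftAt τ t (k j)) →
            betaDenomOK η ℓ (Function.update x j z) (shiftAt τ t (k j)) →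
            G z = w0 τ η ξp ξm ℓ k (Function.update x j z) (shiftAt τ t (k j)) *
              betaF η ξm ℓ m (Function.update x j z) (shiftAt τ t (k j)) := by
  set G : ℂ → ℂ := fun z =>
    regIntegrand τ η ξp ξm ℓ k m (shiftAt τ t (k j)) (Function.update x j z)
  refine ⟨w0_mul_betaF_update_add_pi_mul_I m x j, {z | AnalyticAt ℂ G z}, isOpen_analyticAt ℂ G,
    fun z hz => ?_, G, fun z hz => hz.differentiableAt.differentiableWithinAt,
    fun z _ hw hβ => regIntegrand_eq_w0_mul_betaF m hw hβ⟩
  exact analyticAt_regIntegrand_comp hτ (analyticAt_update_apply x j · z)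
    (update_mem_regDomain hτ hk hℓ hγ hγτ ht hxlt hxgt hz) m

/-- analogue of Lemma `lem:integrandanalyticinstrip`: the function
`x_j ↦ w_k(x;t+τe_{k_j}) β_m(x;t+τe_{k_j}) / Φ_k(t+τe_{k_j})` is `π√−1`-periodic and
has no poles in the vertical strip `S_τ(t_{k_j}+γ_j+τ)`. -/
theorem stmt14 (τ η ξp ξm : ℂ) (hτ : τ.re < 0) (M N : ℕ) (hN : 1 ≤ N)
    (ℓ : Fin N → ℂ) (k : Fin M → Fin N) (hk : Monotone k)
    (hD : Dmn η ℓ k)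
    (hτ1 : ∀ r : Fin N, -τ.re ≤ (ℓ r * η).re)
    (hτ2 : ∀ r : Fin N,
      -τ.re < ((2 * ℓ r + 1 - (nk k r : ℂ)) * η).re / ((nk k r : ℝ) + 1))
    (γ : Fin M → ℂ) (hγ : GamTau τ η ℓ k γ) (j : Fin M)
    (t : Fin N → ℂ) (ht : t ∈ AtilTau τ η ξp ξm ℓ) (x : Fin M → ℂ)
    (hxlt : ∀ i : Fin M, i < j → ∃ s ∈ Set.Icc (0 : ℝ) Real.pi,
      x i = t (k i) + γ i + (s : ℂ) * I)
    (hxgt : ∀ i : Fin M, j < i → ∃ s ∈ Set.Icc (0 : ℝ) Real.pi,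
      x i = t (k i) + γ i + (if k i = k j then τ else 0) + (s : ℂ) * I) :
    ∀ m : Fin M → Fin N, Monotone m →
      (∀ z : ℂ,
        w0 τ η ξp ξm ℓ k (Function.update x j (z + (Real.pi : ℂ) * I))
            (fun s => t s + if s = k j then τ else 0) *
          betaF η ξm ℓ m (Function.update x j (z + (Real.pi : ℂ) * I))
            (fun s => t s + if s = k j then τ else 0) =
        w0 τ η ξp ξm ℓ k (Function.update x j z)
            (fun s => t s + if s = k j then τ else 0) *
          betaF η ξm ℓ m (Function.update x j z)
            (fun s => t s + if s = k j then τ else 0)) ∧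
      ∃ U : Set ℂ, IsOpen U ∧
        {z : ℂ | (t (k j) + γ j + τ).re ≤ z.re ∧ z.re ≤ (t (k j) + γ j).re} ⊆ U ∧
        ∃ G : ℂ → ℂ, DifferentiableOn ℂ G U ∧
          ∀ z ∈ U,
            w0DenomOK τ η ξp ξm ℓ k (Function.update x j z)
                (fun s => t s + if s = k j then τ else 0) →
            betaDenomOK η ℓ (Function.update x j z)
                (fun s => t s + if s = k j then τ else 0) →
            G z = w0 τ η ξp ξm ℓ k (Function.update x j z)
                  (fun s => t s + if s = k j then τ else 0) *
                betaF η ξm ℓ m (Function.update x j z)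
                  (fun s => t s + if s = k j then τ else 0) := by
  have hℓ (r) : 0 ≤ (ℓ r * η).re := (le_max_left _ _).trans (hD r).le
  exact fun m _ => stmt14_general hτ hk hℓ hγ.1 (fun i => abs_lt.2 (hγ.2.1 i)) ht
    (fun i hi => by obtain ⟨s, -, h⟩ := hxlt i hi; simp [h])
    (fun i hi => by obtain ⟨s, -, h⟩ := hxgt i hi; simp [h]) m

end BQKZ
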